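/- Stronger subadditivity of entropy (matrix case, Theorem 2): Let ρ₁₂₃ be a density matrix on H₁⊗H₂⊗H₃ and let K^1,…,K^M be operators on H₁⊗H₂ satisfying ∑_{α=1}^M K^{α*}K^α = id_{H₁⊗H₂}. Set n^α = Tr[(K^α⊗id₃) ρ₁₂₃ (K^{α*}⊗id₃)], and for each α with n^α > 0 set ρ₂₃^α = Tr₁[(K^α⊗id₃) ρ₁₂₃ (K^{α*}⊗id₃)]/n^α and ρ₂^α = Tr₃ ρ₂₃^α. Then S[ρ₁₂₃] − S[ρ₁₂] ≤ ∑_{α : n^α>0} n^α ( S[ρ₂₃^α] − S[ρ₂^α] ). -/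

import Mathlib

open Matrix Kronecker Real
open scoped ComplexOrder

/-- Von Neumann entropy of a (Hermitian) matrix: the sum of `-λ ln λ` over its
eigenvalues, with the convention `0 ln 0 = 0`. -/
noncomputable def entropy {n : Type*} [Fintype n] [DecidableEq n]
    (A : Matrix n n ℂ) : ℝ :=
  if h : A.IsHermitian then ∑ i, Real.negMulLog (h.eigenvalues i) else 0

/-- Partial trace over the first factor of a twofold tensor product. -/
noncomputable def ptraceFst {m k : Type*} [Fintype m]
    (ρ : Matrix (m × k) (m × k) ℂ) : Matrix k k ℂ :=
  Matrix.of fun i j => ∑ a : m, ρ (a, i) (a, j)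

/-- Partial trace over the second factor of a twofold tensor product. -/
noncomputable def ptraceSnd {m k : Type*} [Fintype k]
    (ρ : Matrix (m × k) (m × k) ℂ) : Matrix m m ℂ :=
  Matrix.of fun i j => ∑ a : k, ρ (i, a) (j, a)

/-- Partial trace over the first factor of a threefold tensor product
(indexed as `(H₁ ⊗ H₂) ⊗ H₃`). -/
noncomputable def ptraceFst₃ {a b c : Type*} [Fintype a]
    (ρ : Matrix ((a × b) × c) ((a × b) × c) ℂ) : Matrix (b × c) (b × c) ℂ :=
  Matrix.of fun p q => ∑ i : a, ρ ((i, p.1), p.2) ((i, q.1), q.2)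

/-!
Since `S(ρ₁₂₃) - S(ρ₁₂) = -D(ρ₁₂₃ ‖ ρ₁₂ ⊗ 1)`, and the unnormalized `ρ₂₃^α` are the outputs of the
instrument whose Kraus operators are the slices `⟨i| K^α` of the `K^α`, the theorem is the
monotonicity of the relative entropy `D` under instruments.

With `L_B X = B X` and `R_A X = X A`, the relative entropy `D(A ‖ B)` is the increment over
`t ∈ (0, ∞)`, up to a `(Tr A) log t` divergence, of a function with derivative
`⟨A, (L_B + t R_A)⁻¹ A⟩`. The latter is the maximum over `X` of
`2 Re Tr X* A - ⟨X, (L_B + t R_A) X⟩`, and inserting `X = ∑ L* X_a L`, summed over the Kraus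
operators `L` of all outcomes `a`, shows that it decreases under the instrument: the linear term is
preserved and the Kadison–Schwarz inequality controls the quadratic one.
-/

open Filter Topology
open scoped MatrixOrder

section SpectralCalculus

variable {n : Type*} [Fintype n] [DecidableEq n] {A : Matrix n n ℂ}

lemma cfc_eq_mul_diagonal_mul_star (hA : A.IsHermitian) (f : ℝ → ℝ) :
    cfc f A = hA.eigenvectorUnitary * diagonal (fun i => (f (hA.eigenvalues i) : ℂ)) *
      star (hA.eigenvectorUnitary : Matrix n n ℂ) := by
  rw [hA.cfc_eq, IsHermitian.cfc, Unitary.conjStarAlgAut_apply]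
  rfl

lemma entropy_eq_trace_cfc (hA : A.IsHermitian) : entropy A = (cfc negMulLog A).trace.re := by
  rw [entropy, dif_pos hA, cfc_eq_mul_diagonal_mul_star hA, trace_mul_cycle,
    Unitary.coe_star_mul_self, Matrix.one_mul, trace_diagonal]
  simp

lemma cfc_mul_log (hA : A.IsHermitian) : cfc (fun x => x * log x) A = A * cfc log A := by
  rw [cfc_mul (fun x => x) log A continuousOn_id (A.finite_real_spectrum.continuousOn _),
    cfc_id' ℝ A hA.isSelfAdjoint]

lemma entropy_eq_neg_trace_mul_log (hA : A.IsHermitian) :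
    entropy A = -(A * cfc log A).trace.re := by
  rw [entropy_eq_trace_cfc hA, negMulLog_eq_neg, cfc_neg, cfc_mul_log hA, trace_neg,
    Complex.neg_re]

lemma entropy_smul (hA : A.IsHermitian) (r : ℝ) :
    entropy (r • A) = r * entropy A + negMulLog r * A.trace.re := by
  have hcfc : cfc negMulLog (r • A) = r • cfc negMulLog A + negMulLog r • A := by
    rw [← cfc_comp_smul r negMulLog A (by fun_prop) hA.isSelfAdjoint,
      ← cfc_const_mul r negMulLog A, ← cfc_const_mul_id (negMulLog r) A hA.isSelfAdjoint,
      ← cfc_add ..]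
    congr with x
    rw [smul_eq_mul, negMulLog_mul]
    ring
  rw [entropy_eq_trace_cfc (hA.smul (.all r)), hcfc, entropy_eq_trace_cfc hA]
  simp [trace_add, trace_smul]

end SpectralCalculus

section ModularOperator

variable {κ n : Type*} [Fintype n] {A B X : Matrix n n ℂ} {t : ℝ}

/-- The operator `L_B + t R_A`, that is `X ↦ B X + t X A`. For invertible `A` it is
`(Δ + t) R_A`, where `Δ = L_B R_A⁻¹` is the relative modular operator. -/
noncomputable def modularOp (A B : Matrix n n ℂ) (t : ℝ) : Matrix n n ℂ →ₗ[ℝ] Matrix n n ℂ :=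
  LinearMap.mulLeft ℝ B + t • LinearMap.mulRight ℝ A

lemma modularOp_apply (A B X : Matrix n n ℂ) (t : ℝ) :
    modularOp A B t X = B * X + t • (X * A) := rfl

lemma modularOp_sum [Fintype κ] (A B : κ → Matrix n n ℂ) (t : ℝ) (X : Matrix n n ℂ) :
    modularOp (∑ k, A k) (∑ k, B k) t X = ∑ k, modularOp (A k) (B k) t X := by
  simp only [modularOp_apply, Finset.sum_mul, Finset.mul_sum, Finset.smul_sum,
    Finset.sum_add_distrib]

lemma re_trace_conjTranspose (M : Matrix n n ℂ) : Mᴴ.trace.re = M.trace.re := by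
  rw [trace_conjTranspose, Complex.star_def, Complex.conj_re]

lemma re_trace_mul_modularOp_comm (hA : A.IsHermitian) (hB : B.IsHermitian)
    (X Y : Matrix n n ℂ) :
    (Xᴴ * modularOp A B t Y).trace.re = (Yᴴ * modularOp A B t X).trace.re := by
  rw [← re_trace_conjTranspose]
  simp only [modularOp_apply, Matrix.mul_add, Matrix.mul_smul, conjTranspose_add,
    conjTranspose_smul, conjTranspose_mul, conjTranspose_conjTranspose, hA.eq, hB.eq, trace_add,
    trace_smul, star_trivial, Matrix.mul_assoc, trace_mul_comm A]

lemma re_trace_mul_modularOp_self (A B X : Matrix n n ℂ) (t : ℝ) :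
    (Xᴴ * modularOp A B t X).trace.re = (Xᴴ * B * X).trace.re + t * (X * A * Xᴴ).trace.re := by
  rw [modularOp_apply, Matrix.mul_add, Matrix.mul_smul, trace_add, trace_smul,
    trace_mul_comm Xᴴ (X * A), Complex.add_re, Complex.real_smul, Complex.re_ofReal_mul,
    Matrix.mul_assoc Xᴴ]

lemma re_trace_mul_modularOp_self_nonneg (hA : A.PosSemidef) (hB : B.PosSemidef) (ht : 0 ≤ t)
    (X : Matrix n n ℂ) : 0 ≤ (Xᴴ * modularOp A B t X).trace.re := by
  rw [re_trace_mul_modularOp_self]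
  have hBX := (hB.conjTranspose_mul_mul_same X).trace_nonneg
  have hAX := (hA.mul_mul_conjTranspose_same X).trace_nonneg
  exact add_nonneg (Complex.le_def.1 hBX).1 (mul_nonneg ht (Complex.le_def.1 hAX).1)

/-- The left side is a concave quadratic in `Y`, stationary at `Y = X`. -/
lemma two_mul_re_trace_sub_le (hA : A.PosSemidef) (hB : B.PosSemidef) (ht : 0 ≤ t)
    (hX : modularOp A B t X = A) (Y : Matrix n n ℂ) :
    2 * (Yᴴ * A).trace.re - (Yᴴ * modularOp A B t Y).trace.re ≤ (Xᴴ * A).trace.re := by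
  have hsq := re_trace_mul_modularOp_self_nonneg hA hB ht (Y - X)
  have hsymm := re_trace_mul_modularOp_comm (t := t) hA.isHermitian hB.isHermitian X Y
  simp only [map_sub, conjTranspose_sub, Matrix.sub_mul, Matrix.mul_sub, trace_sub,
    Complex.sub_re, hsymm, hX] at hsq
  linarith

end ModularOperator

section KrausMap

variable {κ m d : Type*} [Fintype κ]

lemma conjTranspose_compression [Fintype m] (L : κ → Matrix m d ℂ) (X : κ → Matrix m m ℂ) :
    (∑ k, (L k)ᴴ * X k * L k)ᴴ = ∑ k, (L k)ᴴ * (X k)ᴴ * L k := by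
  simp only [conjTranspose_sum, conjTranspose_mul, conjTranspose_conjTranspose, Matrix.mul_assoc]

variable [Fintype d] {A B : Matrix d d ℂ}

/-- The completely positive map `A ↦ ∑ₖ Lₖ A Lₖ*` with Kraus operators `L`. -/
noncomputable def krausMap (L : κ → Matrix m d ℂ) (A : Matrix d d ℂ) : Matrix m m ℂ :=
  ∑ k, L k * A * (L k)ᴴ

lemma posSemidef_krausMap [Finite m] (L : κ → Matrix m d ℂ) (hA : A.PosSemidef) :
    (krausMap L A).PosSemidef :=
  posSemidef_sum _ fun k _ => hA.mul_mul_conjTranspose_same (L k)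

variable [Fintype m]

lemma trace_krausMap (L : κ → Matrix m d ℂ) (A : Matrix d d ℂ) :
    (krausMap L A).trace = ((∑ k, (L k)ᴴ * L k) * A).trace := by
  simp only [krausMap, trace_sum, Finset.sum_mul]
  exact Finset.sum_congr rfl fun k _ => trace_mul_cycle ..

lemma mulVec_conjTranspose_mulVec_of_krausMap_mulVec_eq_zero (hA : A.PosSemidef)
    {L : κ → Matrix m d ℂ} {v : m → ℂ} (hv : krausMap L A *ᵥ v = 0) (k : κ) :
    A *ᵥ ((L k)ᴴ *ᵥ v) = 0 := by
  have hterm (l : κ) : star v ⬝ᵥ ((L l * A * (L l)ᴴ) *ᵥ v) =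
      star ((L l)ᴴ *ᵥ v) ⬝ᵥ (A *ᵥ ((L l)ᴴ *ᵥ v)) := by
    rw [star_mulVec, conjTranspose_conjTranspose, ← dotProduct_mulVec, mulVec_mulVec,
      mulVec_mulVec, Matrix.mul_assoc]
  have hsum : ∑ l, star ((L l)ᴴ *ᵥ v) ⬝ᵥ (A *ᵥ ((L l)ᴴ *ᵥ v)) = 0 := by
    simp only [← hterm, ← dotProduct_sum, ← sum_mulVec]
    rw [← krausMap, hv, dotProduct_zero]
  rw [← hA.dotProduct_mulVec_zero_iff]
  exact (Finset.sum_eq_zero_iff_of_nonneg fun l _ => hA.dotProduct_mulVec_nonneg _).1 hsum k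
    (Finset.mem_univ k)

lemma krausMap_mulVec_eq_zero_of_ker_le (hB : B.PosSemidef)
    (hBA : ∀ v, B *ᵥ v = 0 → A *ᵥ v = 0) (L : κ → Matrix m d ℂ) {v : m → ℂ}
    (hv : krausMap L B *ᵥ v = 0) : krausMap L A *ᵥ v = 0 := by
  rw [krausMap, sum_mulVec]
  refine Finset.sum_eq_zero fun k _ => ?_
  rw [← mulVec_mulVec, ← mulVec_mulVec,
    hBA _ (mulVec_conjTranspose_mulVec_of_krausMap_mulVec_eq_zero hB hv k), mulVec_zero]

variable [DecidableEq d]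

/-- The difference is `∑ₖ Dₖ* Dₖ` with `Dₖ = Xₖ Lₖ - Lₖ Y`, `Y = ∑ₖ Lₖ* Xₖ Lₖ`. -/
lemma kadison_schwarz {L : κ → Matrix m d ℂ} (hL : ∑ k, (L k)ᴴ * L k = 1)
    (X : κ → Matrix m m ℂ) :
    (∑ k, (L k)ᴴ * ((X k)ᴴ * X k) * L k -
      (∑ k, (L k)ᴴ * X k * L k)ᴴ * ∑ k, (L k)ᴴ * X k * L k).PosSemidef := by
  set Y := ∑ k, (L k)ᴴ * X k * L k with hY
  have hYstar : Yᴴ = ∑ k, (L k)ᴴ * (X k)ᴴ * L k := conjTranspose_compression L X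
  have hsq : ∑ k, (L k)ᴴ * ((X k)ᴴ * X k) * L k - Yᴴ * Y =
      ∑ k, (X k * L k - L k * Y)ᴴ * (X k * L k - L k * Y) := by
    have hexpand (k : κ) : (X k * L k - L k * Y)ᴴ * (X k * L k - L k * Y) =
        (L k)ᴴ * ((X k)ᴴ * X k) * L k - (L k)ᴴ * (X k)ᴴ * L k * Y -
          Yᴴ * ((L k)ᴴ * X k * L k) + Yᴴ * ((L k)ᴴ * L k) * Y := by
      simp only [conjTranspose_sub, conjTranspose_mul, Matrix.sub_mul, Matrix.mul_sub,
        Matrix.mul_assoc]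
      abel
    simp only [hexpand, Finset.sum_add_distrib, Finset.sum_sub_distrib, ← Finset.sum_mul,
      ← Finset.mul_sum, ← hY, ← hYstar, hL, Matrix.mul_one]
    abel
  rw [hsq]
  exact posSemidef_sum _ fun k _ => posSemidef_conjTranspose_mul_self _

lemma re_trace_compression_le (hA : A.PosSemidef) {L : κ → Matrix m d ℂ}
    (hL : ∑ k, (L k)ᴴ * L k = 1) (X : κ → Matrix m m ℂ) :
    ((∑ k, (L k)ᴴ * X k * L k) * A * (∑ k, (L k)ᴴ * X k * L k)ᴴ).trace.re ≤
      ∑ k, (X k * (L k * A * (L k)ᴴ) * (X k)ᴴ).trace.re := by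
  set Y := ∑ k, (L k)ᴴ * X k * L k
  obtain ⟨C, rfl⟩ := CStarAlgebra.nonneg_iff_eq_star_mul_self.1 hA.nonneg
  rw [star_eq_conjTranspose]
  have hnonneg := ((kadison_schwarz hL X).mul_mul_conjTranspose_same C).trace_nonneg
  have hX : ∑ k, (X k * (L k * (Cᴴ * C) * (L k)ᴴ) * (X k)ᴴ).trace =
      (C * (∑ k, (L k)ᴴ * ((X k)ᴴ * X k) * L k) * Cᴴ).trace := by
    rw [Finset.mul_sum, Finset.sum_mul, trace_sum]
    refine Finset.sum_congr rfl fun k _ => ?_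
    calc _ = ((X k * L k * Cᴴ) * (C * (L k)ᴴ * (X k)ᴴ)).trace := by simp only [Matrix.mul_assoc]
      _ = ((C * (L k)ᴴ * (X k)ᴴ) * (X k * L k * Cᴴ)).trace := trace_mul_comm ..
      _ = _ := by simp only [Matrix.mul_assoc]
  have hYtr : (Y * (Cᴴ * C) * Yᴴ).trace = (C * (Yᴴ * Y) * Cᴴ).trace := by
    rw [← Matrix.mul_assoc, Matrix.mul_assoc, trace_mul_comm]
    simp only [Matrix.mul_assoc]
  rw [← Complex.re_sum, hX, hYtr, ← sub_nonneg, ← Complex.sub_re, ← trace_sub, ← Matrix.sub_mul,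
    ← Matrix.mul_sub]
  exact (Complex.le_def.1 hnonneg).1

lemma re_trace_mul_modularOp_compression_le (hA : A.PosSemidef) (hB : B.PosSemidef)
    {L : κ → Matrix m d ℂ} (hL : ∑ k, (L k)ᴴ * L k = 1) (X : κ → Matrix m m ℂ) {t : ℝ}
    (ht : 0 ≤ t) :
    ((∑ k, (L k)ᴴ * X k * L k)ᴴ * modularOp A B t (∑ k, (L k)ᴴ * X k * L k)).trace.re ≤
      ∑ k, ((X k)ᴴ *
        modularOp (L k * A * (L k)ᴴ) (L k * B * (L k)ᴴ) t (X k)).trace.re := by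
  have hright := re_trace_compression_le hA hL X
  have hleft := re_trace_compression_le hB hL fun k => (X k)ᴴ
  simp only [← conjTranspose_compression, conjTranspose_conjTranspose] at hleft
  simp only [re_trace_mul_modularOp_self, Finset.sum_add_distrib, ← Finset.mul_sum]
  exact add_le_add hleft (mul_le_mul_of_nonneg_left hright ht)

end KrausMap

section QuasiEntropy

variable {n : Type*} [Fintype n] [DecidableEq n] {A B : Matrix n n ℂ}

lemma mul_eigenvectorUnitary (hA : A.IsHermitian) :
    A * hA.eigenvectorUnitary =
      hA.eigenvectorUnitary * diagonal (fun i => (hA.eigenvalues i : ℂ)) := by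
  have hspec := cfc_eq_mul_diagonal_mul_star hA fun x => x
  rw [cfc_id' ℝ A hA.isSelfAdjoint] at hspec
  conv_lhs => enter [1]; rw [hspec]
  rw [Matrix.mul_assoc, Unitary.coe_star_mul_self, Matrix.mul_one]

/-- The change of basis between the eigenbases `u` of `A` and `v` of `B`, with entries
`⟨vⱼ, uᵢ⟩`. -/
noncomputable def eigenTransition (hA : A.IsHermitian) (hB : B.IsHermitian) : Matrix n n ℂ :=
  star (hB.eigenvectorUnitary : Matrix n n ℂ) * hA.eigenvectorUnitary

/-- The transition probabilities `|⟨vⱼ, uᵢ⟩|²` between the eigenbases `u` of `A` and `v` of `B`. -/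
noncomputable def eigenOverlap (hA : A.IsHermitian) (hB : B.IsHermitian) (j i : n) : ℝ :=
  ‖eigenTransition hA hB j i‖ ^ 2

lemma eigenTransition_mul_star (hA : A.IsHermitian) (hB : B.IsHermitian) (j i : n) :
    eigenTransition hA hB j i * star (eigenTransition hA hB j i) =
      (eigenOverlap hA hB j i : ℂ) := by
  rw [Complex.star_def, Complex.mul_conj', eigenOverlap, Complex.ofReal_pow]

lemma eigenTransition_mul_diagonal (hA : A.IsHermitian) (hB : B.IsHermitian) :
    eigenTransition hA hB * diagonal (fun i => (hA.eigenvalues i : ℂ)) =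
      star (hB.eigenvectorUnitary : Matrix n n ℂ) * A * hA.eigenvectorUnitary := by
  rw [eigenTransition, Matrix.mul_assoc, ← mul_eigenvectorUnitary, Matrix.mul_assoc]

lemma re_trace_cfc_mul_cfc (hA : A.IsHermitian) (hB : B.IsHermitian) (f g : ℝ → ℝ) :
    (cfc f A * cfc g B).trace.re = ∑ j, ∑ i, eigenOverlap hA hB j i *
      (f (hA.eigenvalues i) * g (hB.eigenvalues j)) := by
  have hcycle : (cfc f A * cfc g B).trace =
      (eigenTransition hA hB * diagonal (fun i => (f (hA.eigenvalues i) : ℂ)) *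
        star (eigenTransition hA hB) * diagonal (fun j => (g (hB.eigenvalues j) : ℂ))).trace := by
    rw [cfc_eq_mul_diagonal_mul_star hA, cfc_eq_mul_diagonal_mul_star hB, ← Matrix.mul_assoc,
      trace_mul_comm, eigenTransition, star_mul, star_star]
    simp only [Matrix.mul_assoc]
  rw [hcycle, trace, Complex.re_sum]
  refine Finset.sum_congr rfl fun j _ => ?_
  rw [diag_apply, mul_diagonal, Matrix.mul_apply, Finset.sum_mul, Complex.re_sum]
  refine Finset.sum_congr rfl fun i _ => ?_
  rw [mul_diagonal, star_apply, mul_right_comm (eigenTransition hA hB j i),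
    eigenTransition_mul_star]
  norm_cast
  rw [mul_assoc]

lemma eigenOverlap_mul_eigenvalues_eq_zero (hA : A.IsHermitian) (hB : B.IsHermitian)
    (hBA : ∀ v, B *ᵥ v = 0 → A *ᵥ v = 0) {j : n} (hj : hB.eigenvalues j = 0) (i : n) :
    eigenOverlap hA hB j i * hA.eigenvalues i = 0 := by
  have hAv : A *ᵥ hB.eigenvectorBasis j = 0 :=
    hBA _ (by rw [hB.mulVec_eigenvectorBasis, hj, zero_smul])
  have hrow : (star (hB.eigenvectorUnitary : Matrix n n ℂ) * A) j = 0 := by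
    ext k
    rw [star_eq_conjTranspose, ← hA.eq, ← conjTranspose_mul, conjTranspose_apply]
    exact (congrArg star (congrFun hAv k)).trans (star_zero ℂ)
  have hentry := congrFun₂ (eigenTransition_mul_diagonal hA hB) j i
  rw [mul_diagonal, Matrix.mul_apply, hrow] at hentry
  rcases mul_eq_zero.1 (hentry.trans (by simp)) with h | h
  · simp [eigenOverlap, h]
  · rw [Complex.ofReal_eq_zero.1 h, mul_zero]

/-- Petz's quasi-entropy `⟨A, (L_B + t R_A)⁻¹ A⟩`, in the eigenbases of `A` and `B`. -/
noncomputable def resolventQuasiEntropy (hA : A.IsHermitian) (hB : B.IsHermitian) (t : ℝ) : ℝ :=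
  ∑ j, ∑ i, eigenOverlap hA hB j i *
    (hA.eigenvalues i ^ 2 / (hB.eigenvalues j + t * hA.eigenvalues i))

/-- The solution `(L_B + t R_A)⁻¹ A` of `modularOp A B t X = A`, in the eigenbases of `A` and
`B`. The junk value `0 / 0 = 0` picks out a solution when `L_B + t R_A` is singular. -/
noncomputable def modularSolution (hA : A.IsHermitian) (hB : B.IsHermitian) (t : ℝ) :
    Matrix n n ℂ :=
  hB.eigenvectorUnitary * (of fun j i => eigenTransition hA hB j i *
    ((hA.eigenvalues i / (hB.eigenvalues j + t * hA.eigenvalues i) : ℝ) : ℂ)) *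
      star (hA.eigenvectorUnitary : Matrix n n ℂ)

lemma modularOp_eigenvectorUnitary (hA : A.IsHermitian) (hB : B.IsHermitian) (t : ℝ)
    (Z : Matrix n n ℂ) :
    modularOp A B t (hB.eigenvectorUnitary * Z * star (hA.eigenvectorUnitary : Matrix n n ℂ)) =
      hB.eigenvectorUnitary * modularOp (diagonal fun i => (hA.eigenvalues i : ℂ))
        (diagonal fun j => (hB.eigenvalues j : ℂ)) t Z *
          star (hA.eigenvectorUnitary : Matrix n n ℂ) := by
  have hstar : star (hA.eigenvectorUnitary : Matrix n n ℂ) * A =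
      diagonal (fun i => (hA.eigenvalues i : ℂ)) *
        star (hA.eigenvectorUnitary : Matrix n n ℂ) := by
    simpa [star_eq_conjTranspose, hA.eq, diagonal_conjTranspose, Pi.star_def] using
      congrArg conjTranspose (mul_eigenvectorUnitary hA)
  simp only [modularOp_apply, Matrix.mul_add, Matrix.add_mul, Matrix.mul_smul, Matrix.smul_mul,
    Matrix.mul_assoc, hstar]
  simp only [← Matrix.mul_assoc, mul_eigenvectorUnitary]

lemma modularOp_diagonal_of_div {p q : n → ℝ} (hp : 0 ≤ p) (hq : 0 ≤ q) {t : ℝ}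
    (ht : 0 < t) (W : Matrix n n ℂ) :
    modularOp (diagonal fun i => (p i : ℂ)) (diagonal fun j => (q j : ℂ)) t
        (of fun j i => W j i * ((p i / (q j + t * p i) : ℝ) : ℂ)) =
      W * diagonal fun i => (p i : ℂ) := by
  ext j i
  have hsolve : q j * (p i / (q j + t * p i)) + t * (p i / (q j + t * p i) * p i) = p i := by
    rcases (show 0 ≤ p i from hp i).eq_or_lt with h | h
    · simp [← h]
    · have hne : q j + t * p i ≠ 0 := (add_pos_of_nonneg_of_pos (hq j) (mul_pos ht h)).ne'
      calc _ = p i / (q j + t * p i) * (q j + t * p i) := by ring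
        _ = p i := div_mul_cancel₀ _ hne
  rw [modularOp_apply, Matrix.add_apply, diagonal_mul, Matrix.smul_apply, mul_diagonal,
    mul_diagonal, of_apply, Complex.real_smul]
  conv_rhs => rw [← hsolve]
  push_cast
  ring

lemma modularOp_modularSolution (hA : A.PosSemidef) (hB : B.PosSemidef) {t : ℝ} (ht : 0 < t) :
    modularOp A B t (modularSolution hA.isHermitian hB.isHermitian t) = A := by
  rw [modularSolution, modularOp_eigenvectorUnitary,
    modularOp_diagonal_of_div hA.eigenvalues_nonneg hB.eigenvalues_nonneg ht,
    eigenTransition_mul_diagonal]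
  simp only [← Matrix.mul_assoc]
  rw [Unitary.mul_star_self_of_mem (SetLike.coe_mem _), Matrix.one_mul, Matrix.mul_assoc,
    Unitary.mul_star_self_of_mem (SetLike.coe_mem _), Matrix.mul_one]

lemma re_trace_modularSolution (hA : A.IsHermitian) (hB : B.IsHermitian) (t : ℝ) :
    ((modularSolution hA hB t)ᴴ * A).trace.re = resolventQuasiEntropy hA hB t := by
  have hcycle (Z : Matrix n n ℂ) :
      (((hB.eigenvectorUnitary : Matrix n n ℂ) * Z *
        star (hA.eigenvectorUnitary : Matrix n n ℂ))ᴴ * A).trace =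
        (Zᴴ * (eigenTransition hA hB * diagonal fun i => (hA.eigenvalues i : ℂ))).trace := by
    rw [eigenTransition_mul_diagonal, ← star_eq_conjTranspose, star_mul, star_star,
      Matrix.mul_assoc, trace_mul_comm]
    simp only [star_eq_conjTranspose, conjTranspose_mul, Matrix.mul_assoc]
  rw [modularSolution, hcycle, trace, Complex.re_sum, resolventQuasiEntropy, Finset.sum_comm]
  refine Finset.sum_congr rfl fun i _ => ?_
  rw [diag_apply, Matrix.mul_apply, Complex.re_sum]
  refine Finset.sum_congr rfl fun j _ => ?_
  have hreal (r : ℝ) : star (r : ℂ) = r := Complex.conj_ofReal r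
  rw [mul_diagonal, conjTranspose_apply, of_apply, star_mul', hreal, mul_mul_mul_comm,
    mul_comm (star _), eigenTransition_mul_star]
  norm_cast
  ring

/-- The primitive of `resolventQuasiEntropy` in `t` that interpolates between `Tr A log B` at
`t = 0` and, up to `(Tr A) log t`, `Tr A log A` at `t = ∞`. -/
noncomputable def logQuasiEntropy (hA : A.IsHermitian) (hB : B.IsHermitian) (t : ℝ) : ℝ :=
  ∑ j, ∑ i, eigenOverlap hA hB j i *
    (hA.eigenvalues i * log (hB.eigenvalues j + t * hA.eigenvalues i))

lemma hasDerivAt_logQuasiEntropy (hA : A.PosSemidef) (hB : B.PosSemidef) {t : ℝ} (ht : 0 < t) :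
    HasDerivAt (logQuasiEntropy hA.isHermitian hB.isHermitian)
      (resolventQuasiEntropy hA.isHermitian hB.isHermitian t) t := by
  refine HasDerivAt.fun_sum fun j _ => HasDerivAt.fun_sum fun i _ => HasDerivAt.const_mul _ ?_
  rcases (hA.eigenvalues_nonneg i).eq_or_lt with hp | hp
  · simpa [← hp] using hasDerivAt_const t (0 : ℝ)
  · have hpos := add_pos_of_nonneg_of_pos (hB.eigenvalues_nonneg j) (mul_pos ht hp)
    have hlin := ((hasDerivAt_id' t).mul_const (hA.isHermitian.eigenvalues i)).const_add
      (hB.isHermitian.eigenvalues j)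
    convert (hlin.log hpos.ne').const_mul (hA.isHermitian.eigenvalues i) using 1
    ring

lemma tendsto_logQuasiEntropy_nhdsGT_zero (hA : A.IsHermitian) (hB : B.IsHermitian)
    (hBA : ∀ v, B *ᵥ v = 0 → A *ᵥ v = 0) :
    Tendsto (logQuasiEntropy hA hB) (𝓝[>] 0) (𝓝 (A * cfc log B).trace.re) := by
  conv in A * cfc log B => rw [← cfc_id' ℝ A hA.isSelfAdjoint]
  rw [re_trace_cfc_mul_cfc hA hB]
  refine tendsto_finsetSum _ fun j _ => tendsto_finsetSum _ fun i _ => ?_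
  simp only [← mul_assoc]
  by_cases hq : hB.eigenvalues j = 0
  · simp [eigenOverlap_mul_eigenvalues_eq_zero hA hB hBA hq]
  · have hlin : Tendsto (fun t => hB.eigenvalues j + t * hA.eigenvalues i) (𝓝 0)
        (𝓝 (hB.eigenvalues j)) := by
      simpa using Continuous.tendsto (by fun_prop :
        Continuous fun t => hB.eigenvalues j + t * hA.eigenvalues i) 0
    exact ((hlin.log hq).mono_left nhdsWithin_le_nhds).const_mul _

lemma re_trace_eq_sum_eigenOverlap (hA : A.IsHermitian) (hB : B.IsHermitian) (f : ℝ → ℝ) :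
    (cfc f A).trace.re = ∑ j, ∑ i, eigenOverlap hA hB j i * f (hA.eigenvalues i) := by
  have h := re_trace_cfc_mul_cfc hA hB f fun _ => 1
  simpa [cfc_const_one ℝ B hB.isSelfAdjoint] using h

lemma tendsto_logQuasiEntropy_atTop (hA : A.PosSemidef) (hB : B.PosSemidef) :
    Tendsto (fun t => logQuasiEntropy hA.isHermitian hB.isHermitian t - A.trace.re * log t) atTop
      (𝓝 (A * cfc log A).trace.re) := by
  have htrace := re_trace_eq_sum_eigenOverlap hA.isHermitian hB.isHermitian fun x => x
  rw [cfc_id' ℝ A hA.isHermitian.isSelfAdjoint] at htrace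
  simp only [htrace, ← cfc_mul_log hA.isHermitian, logQuasiEntropy, Finset.sum_mul,
    ← Finset.sum_sub_distrib, re_trace_eq_sum_eigenOverlap hA.isHermitian hB.isHermitian]
  refine tendsto_finsetSum _ fun j _ => tendsto_finsetSum _ fun i _ => ?_
  simp only [mul_assoc, ← mul_sub]
  refine Tendsto.const_mul _ ?_
  rcases (hA.eigenvalues_nonneg i).eq_or_lt with hp | hp
  · simp [← hp]
  refine Tendsto.const_mul _ ?_
  have hlim : Tendsto (fun t => hB.isHermitian.eigenvalues j / t + hA.isHermitian.eigenvalues i)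
      atTop (𝓝 (0 + hA.isHermitian.eigenvalues i)) :=
    (tendsto_const_nhds.div_atTop tendsto_id).add_const _
  rw [zero_add] at hlim
  refine (hlim.log hp.ne').congr' ?_
  filter_upwards [eventually_gt_atTop 0] with t ht
  have hpos := add_pos_of_nonneg_of_pos (hB.eigenvalues_nonneg j) (mul_pos ht hp)
  rw [← log_div hpos.ne' ht.ne', add_div, mul_div_cancel_left₀ _ ht.ne']

end QuasiEntropy

section RelativeEntropy

lemma le_of_tendsto_of_hasDerivAt_nonneg {f f' : ℝ → ℝ} {a b : ℝ}
    (hderiv : ∀ t, 0 < t → HasDerivAt f (f' t) t) (hf' : ∀ t, 0 < t → 0 ≤ f' t)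
    (hzero : Tendsto f (𝓝[>] 0) (𝓝 a)) (htop : Tendsto f atTop (𝓝 b)) : a ≤ b := by
  have hmono : MonotoneOn f (Set.Ioi 0) := by
    refine monotoneOn_of_deriv_nonneg (convex_Ioi 0)
      (fun t ht => (hderiv t ht).continuousAt.continuousWithinAt) ?_ ?_ <;> rw [interior_Ioi]
    · exact fun t ht => (hderiv t ht).differentiableAt.differentiableWithinAt
    · exact fun t ht => (hderiv t ht).deriv.symm ▸ hf' t ht
  have hone : (1 : ℝ) ∈ Set.Ioi 0 := Set.mem_Ioi.2 one_pos
  calc a ≤ f 1 := le_of_tendsto hzero <| by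
        filter_upwards [Ioo_mem_nhdsGT one_pos] with t ht using hmono ht.1 hone ht.2.le
    _ ≤ b := ge_of_tendsto htop <| by
        filter_upwards [eventually_ge_atTop 1] with t ht
          using hmono hone (one_pos.trans_le ht) ht

variable {ι κ m d : Type*} [Fintype ι] [Fintype κ] [Fintype m] [Fintype d] [DecidableEq m]
  [DecidableEq d] {A B : Matrix d d ℂ} {L : ι → κ → Matrix m d ℂ}

lemma sum_resolventQuasiEntropy_krausMap_le (hA : A.PosSemidef) (hB : B.PosSemidef)
    (hL : ∑ a, ∑ k, (L a k)ᴴ * L a k = 1) {t : ℝ} (ht : 0 < t) :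
    ∑ a, resolventQuasiEntropy (posSemidef_krausMap (L a) hA).isHermitian
        (posSemidef_krausMap (L a) hB).isHermitian t ≤
      resolventQuasiEntropy hA.isHermitian hB.isHermitian t := by
  set X := fun a => modularSolution (posSemidef_krausMap (L a) hA).isHermitian
    (posSemidef_krausMap (L a) hB).isHermitian t
  have hX (a : ι) : modularOp (krausMap (L a) A) (krausMap (L a) B) t (X a) = krausMap (L a) A :=
    modularOp_modularSolution (posSemidef_krausMap (L a) hA) (posSemidef_krausMap (L a) hB) ht
  have hcompress := re_trace_mul_modularOp_compression_le hA hB (L := fun x : ι × κ => L x.1 x.2)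
    (by rwa [Fintype.sum_prod_type]) (fun x => X x.1) ht.le
  set Y := ∑ x : ι × κ, (L x.1 x.2)ᴴ * X x.1 * L x.1 x.2 with hY
  have hlinear : (Yᴴ * A).trace.re = ∑ a, ((X a)ᴴ * krausMap (L a) A).trace.re := by
    simp only [hY, conjTranspose_sum, conjTranspose_mul, conjTranspose_conjTranspose,
      Finset.sum_mul, Fintype.sum_prod_type, krausMap, Finset.mul_sum, trace_sum, Complex.re_sum]
    refine Finset.sum_congr rfl fun a _ => Finset.sum_congr rfl fun k _ => ?_
    rw [Matrix.mul_assoc, trace_mul_comm]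
    simp only [Matrix.mul_assoc]
  have hquadratic : ∑ x : ι × κ, ((X x.1)ᴴ * modularOp (L x.1 x.2 * A * (L x.1 x.2)ᴴ)
      (L x.1 x.2 * B * (L x.1 x.2)ᴴ) t (X x.1)).trace.re =
        ∑ a, ((X a)ᴴ * krausMap (L a) A).trace.re := by
    simp only [Fintype.sum_prod_type, ← Complex.re_sum, ← trace_sum, ← Finset.mul_sum,
      ← modularOp_sum]
    exact congrArg Complex.re (congrArg trace (Finset.sum_congr rfl fun a _ =>
      congrArg _ (hX a)))
  have hmax := two_mul_re_trace_sub_le hA hB ht.le (modularOp_modularSolution hA hB ht) Y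
  rw [re_trace_modularSolution] at hmax
  have hsum : ∑ a, resolventQuasiEntropy (posSemidef_krausMap (L a) hA).isHermitian
      (posSemidef_krausMap (L a) hB).isHermitian t =
        ∑ a, ((X a)ᴴ * krausMap (L a) A).trace.re := by
    simp only [X, re_trace_modularSolution]
  linarith

/-- The relative entropy `Tr A (log A - log B)`. Since `log 0 = 0`, it agrees with the usual
notion only when `ker B ⊆ ker A`; otherwise the latter is infinite. -/
noncomputable def relEntropy (A B : Matrix d d ℂ) : ℝ :=
  (A * (cfc log A - cfc log B)).trace.re

/-- The `log t` divergences of `logQuasiEntropy` at infinity cancel because the instrument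
preserves the trace. -/
theorem sum_relEntropy_krausMap_le (hA : A.PosSemidef) (hB : B.PosSemidef)
    (hBA : ∀ v, B *ᵥ v = 0 → A *ᵥ v = 0) (hL : ∑ a, ∑ k, (L a k)ᴴ * L a k = 1) :
    ∑ a, relEntropy (krausMap (L a) A) (krausMap (L a) B) ≤ relEntropy A B := by
  have hLA (a : ι) := posSemidef_krausMap (L a) hA
  have hLB (a : ι) := posSemidef_krausMap (L a) hB
  have htrace : A.trace.re = ∑ a, (krausMap (L a) A).trace.re := by
    simp only [trace_krausMap, ← Complex.re_sum, ← trace_sum, ← Finset.sum_mul, hL,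
      Matrix.one_mul]
  have hincrement := le_of_tendsto_of_hasDerivAt_nonneg
    (fun t ht => (hasDerivAt_logQuasiEntropy hA hB ht).sub
      (HasDerivAt.fun_sum fun a _ => hasDerivAt_logQuasiEntropy (hLA a) (hLB a) ht))
    (fun t ht => sub_nonneg.2 (sum_resolventQuasiEntropy_krausMap_le hA hB hL ht))
    ((tendsto_logQuasiEntropy_nhdsGT_zero hA.isHermitian hB.isHermitian hBA).sub
      (tendsto_finsetSum _ fun a _ => tendsto_logQuasiEntropy_nhdsGT_zero (hLA a).isHermitian
        (hLB a).isHermitian fun v => krausMap_mulVec_eq_zero_of_ker_le hB hBA (L a)))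
    (((tendsto_logQuasiEntropy_atTop hA hB).sub
      (tendsto_finsetSum _ fun a _ => tendsto_logQuasiEntropy_atTop (hLA a) (hLB a))).congr
        fun t => by
          rw [Finset.sum_sub_distrib, ← Finset.sum_mul, ← htrace, sub_sub_sub_cancel_right]
          rfl)
  simp only [relEntropy, Matrix.mul_sub, trace_sub, Complex.sub_re, Finset.sum_sub_distrib]
  linarith

end RelativeEntropy

section PartialTrace

variable {κ m n d c : Type*}

/-- The unital `*`-homomorphism `B ↦ B ⊗ 1`. -/
noncomputable def kroneckerOne (m c : Type*) [Fintype m] [Fintype c] [DecidableEq m]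
    [DecidableEq c] : Matrix m m ℂ →⋆ₐ[ℝ] Matrix (m × c) (m × c) ℂ where
  toFun B := B ⊗ₖ 1
  map_one' := one_kronecker_one
  map_mul' A B := by rw [← mul_kronecker_mul, Matrix.one_mul]
  map_zero' := zero_kronecker _
  map_add' A B := add_kronecker A B _
  commutes' r := by
    simp only [Algebra.algebraMap_eq_smul_one, smul_kronecker, one_kronecker_one]
  map_star' A := by simp [star_eq_conjTranspose, conjTranspose_kronecker]

lemma cfc_kronecker_one [Fintype m] [Fintype c] [DecidableEq m] [DecidableEq c]
    {B : Matrix m m ℂ} (hB : B.IsHermitian) (f : ℝ → ℝ) :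
    cfc f (B ⊗ₖ (1 : Matrix c c ℂ)) = cfc f B ⊗ₖ (1 : Matrix c c ℂ) := by
  refine ((kroneckerOne m c).map_cfc f B (B.finite_real_spectrum.continuousOn f) ?_
    hB.isSelfAdjoint ?_).symm
  · exact (kroneckerOne m c).toLinearMap.continuous_of_finiteDimensional
  · exact hB.isSelfAdjoint.map _

lemma krausMap_kronecker_one [Fintype κ] [Fintype c] [Fintype d] [DecidableEq c]
    (L : κ → Matrix m d ℂ) (B : Matrix d d ℂ) :
    krausMap (fun k => L k ⊗ₖ (1 : Matrix c c ℂ)) (B ⊗ₖ 1) = krausMap L B ⊗ₖ 1 := by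
  simp only [krausMap, conjTranspose_kronecker, conjTranspose_one, ← mul_kronecker_mul,
    Matrix.one_mul]
  ext i j
  simp [Matrix.sum_apply, Finset.sum_mul]

lemma sum_conjTranspose_submatrix_mul_submatrix [Fintype κ] [Fintype m] [Fintype n]
    (e : κ × m ≃ n) (M : Matrix n d ℂ) :
    ∑ k, (M.submatrix (fun i => e (k, i)) id)ᴴ * M.submatrix (fun i => e (k, i)) id =
      Mᴴ * M := by
  ext i j
  simp only [Matrix.sum_apply, Matrix.mul_apply, conjTranspose_apply, submatrix_apply, id_eq]
  rw [← Fintype.sum_prod_type', e.sum_comp fun k => star (M k i) * M k j]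

/-- The operator `1 ⊗ ⟨b|` from `ℂᵐ ⊗ ℂᶜ` to `ℂᵐ`; these are the Kraus operators of
`ptraceSnd`. -/
noncomputable def sliceSnd (m : Type*) [DecidableEq m] [DecidableEq c] (b : c) :
    Matrix m (m × c) ℂ :=
  (1 : Matrix (m × c) (m × c) ℂ).submatrix (fun i => (i, b)) id

variable [Fintype c]

lemma ptraceSnd_eq_krausMap [Fintype m] [DecidableEq m] [DecidableEq c]
    (A : Matrix (m × c) (m × c) ℂ) : ptraceSnd A = krausMap (sliceSnd m) A := by
  ext i j
  simp [ptraceSnd, krausMap, sliceSnd, Matrix.sum_apply, Matrix.mul_apply, one_apply]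

lemma sum_conjTranspose_sliceSnd_mul_sliceSnd [Fintype m] [DecidableEq m] [DecidableEq c] :
    ∑ b : c, (sliceSnd m b)ᴴ * sliceSnd m b = 1 := by
  have h := sum_conjTranspose_submatrix_mul_submatrix (Equiv.prodComm c m)
    (1 : Matrix (m × c) (m × c) ℂ)
  rwa [conjTranspose_one, Matrix.mul_one] at h

lemma sliceSnd_mul_kronecker_one [Fintype m] [DecidableEq m] [Fintype d] [DecidableEq d]
    [DecidableEq c] (b : c) (L : Matrix m d ℂ) :
    sliceSnd m b * (L ⊗ₖ (1 : Matrix c c ℂ)) = L * sliceSnd d b := by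
  ext i j
  simp [sliceSnd, Matrix.mul_apply, one_apply, Fintype.sum_prod_type, Prod.ext_iff, ite_and]

lemma posSemidef_ptraceSnd [Finite m] {A : Matrix (m × c) (m × c) ℂ} (hA : A.PosSemidef) :
    (ptraceSnd A).PosSemidef := by
  classical
  cases nonempty_fintype m
  rw [ptraceSnd_eq_krausMap]
  exact posSemidef_krausMap _ hA

lemma trace_ptraceSnd [Fintype m] (A : Matrix (m × c) (m × c) ℂ) :
    (ptraceSnd A).trace = A.trace := by
  simp only [trace, diag_apply, ptraceSnd, of_apply, Fintype.sum_prod_type]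

lemma trace_mul_kronecker_one [Fintype m] [DecidableEq c] (A : Matrix (m × c) (m × c) ℂ)
    (B : Matrix m m ℂ) : (A * (B ⊗ₖ (1 : Matrix c c ℂ))).trace = (ptraceSnd A * B).trace := by
  simp only [trace, diag_apply, Matrix.mul_apply, ptraceSnd, of_apply, kroneckerMap_apply,
    one_apply, mul_ite, mul_one, mul_zero, Fintype.sum_prod_type, Finset.sum_ite_eq',
    Finset.mem_univ, if_true, Finset.sum_mul]
  exact Finset.sum_congr rfl fun i _ => Finset.sum_comm

lemma ptraceSnd_krausMap_kronecker_one [Fintype κ] [Fintype d] [Finite m] [DecidableEq c]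
    (L : κ → Matrix m d ℂ) (A : Matrix (d × c) (d × c) ℂ) :
    ptraceSnd (krausMap (fun k => L k ⊗ₖ (1 : Matrix c c ℂ)) A) = krausMap L (ptraceSnd A) := by
  classical
  cases nonempty_fintype m
  have hterm (b : c) (k : κ) : sliceSnd m b * ((L k ⊗ₖ (1 : Matrix c c ℂ)) * A *
      (L k ⊗ₖ (1 : Matrix c c ℂ))ᴴ) * (sliceSnd m b)ᴴ =
        L k * (sliceSnd d b * A * (sliceSnd d b)ᴴ) * (L k)ᴴ := by
    rw [Matrix.mul_assoc, Matrix.mul_assoc _ _ (sliceSnd m b)ᴴ, ← conjTranspose_mul,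
      ← Matrix.mul_assoc, ← Matrix.mul_assoc, sliceSnd_mul_kronecker_one, conjTranspose_mul]
    simp only [Matrix.mul_assoc]
  rw [ptraceSnd_eq_krausMap, ptraceSnd_eq_krausMap]
  simp only [krausMap, Matrix.mul_sum, Matrix.sum_mul, hterm]
  exact Finset.sum_comm

lemma mulVec_eq_zero_of_ptraceSnd_kronecker_one_mulVec_eq_zero [Fintype m] [DecidableEq c]
    {A : Matrix (m × c) (m × c) ℂ} (hA : A.PosSemidef) {v : m × c → ℂ}
    (hv : (ptraceSnd A ⊗ₖ (1 : Matrix c c ℂ)) *ᵥ v = 0) : A *ᵥ v = 0 := by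
  classical
  have hslice (b : c) : krausMap (sliceSnd m) A *ᵥ (sliceSnd m b *ᵥ v) = 0 := by
    rw [← ptraceSnd_eq_krausMap, mulVec_mulVec, ← sliceSnd_mul_kronecker_one, ← mulVec_mulVec,
      hv, mulVec_zero]
  rw [← one_mulVec v, ← sum_conjTranspose_sliceSnd_mul_sliceSnd, sum_mulVec, mulVec_sum]
  refine Finset.sum_eq_zero fun b _ => ?_
  rw [← mulVec_mulVec]
  exact mulVec_conjTranspose_mulVec_of_krausMap_mulVec_eq_zero hA (hslice b) b

end PartialTrace

section ConditionalEntropy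

variable {ι κ m c d : Type*}

/-- The conditional entropy `S(A) - S(Tr₂ A)` of an operator on a twofold tensor product. -/
noncomputable def condEntropy [Fintype m] [Fintype c] [DecidableEq m] [DecidableEq c]
    (A : Matrix (m × c) (m × c) ℂ) : ℝ :=
  entropy A - entropy (ptraceSnd A)

variable [Fintype ι] [Fintype κ] [Fintype m] [Fintype c] [Fintype d] [DecidableEq m]
  [DecidableEq c] [DecidableEq d] {A : Matrix (m × c) (m × c) ℂ}

lemma condEntropy_smul (hA : A.PosSemidef) (r : ℝ) :
    condEntropy (r • A) = r * condEntropy A := by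
  have hptrace : ptraceSnd (r • A) = r • ptraceSnd A := by
    ext i j
    simp [ptraceSnd, Finset.mul_sum]
  rw [condEntropy, hptrace, entropy_smul hA.isHermitian,
    entropy_smul (posSemidef_ptraceSnd hA).isHermitian, trace_ptraceSnd, condEntropy]
  ring

lemma trace_mul_condEntropy_inv_trace_smul (hA : A.PosSemidef) :
    A.trace.re * condEntropy (A.trace.re⁻¹ • A) = condEntropy A := by
  rw [condEntropy_smul hA]
  by_cases h : A.trace.re = 0
  · have htrace : A.trace = 0 := Complex.ext h (Complex.le_def.1 hA.trace_nonneg).2.symm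
    have hzero : A = 0 := hA.trace_eq_zero_iff.1 htrace
    simpa [hzero] using (condEntropy_smul hA 0).symm
  · exact mul_inv_cancel_left₀ h _

lemma condEntropy_eq_neg_relEntropy (hA : A.PosSemidef) :
    condEntropy A = -relEntropy A (ptraceSnd A ⊗ₖ (1 : Matrix c c ℂ)) := by
  have hB := (posSemidef_ptraceSnd hA).isHermitian
  rw [condEntropy, entropy_eq_neg_trace_mul_log hA.isHermitian, entropy_eq_neg_trace_mul_log hB,
    relEntropy, cfc_kronecker_one hB, Matrix.mul_sub, trace_sub, trace_mul_kronecker_one,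
    Complex.sub_re]
  ring

theorem condEntropy_le_sum_condEntropy_krausMap {ρ : Matrix (d × c) (d × c) ℂ}
    (hρ : ρ.PosSemidef) {L : ι → κ → Matrix m d ℂ} (hL : ∑ a, ∑ k, (L a k)ᴴ * L a k = 1) :
    condEntropy ρ ≤ ∑ a, condEntropy (krausMap (fun k => L a k ⊗ₖ (1 : Matrix c c ℂ)) ρ) := by
  have hL' : ∑ a, ∑ k, (L a k ⊗ₖ (1 : Matrix c c ℂ))ᴴ *
      (L a k ⊗ₖ (1 : Matrix c c ℂ)) = 1 := by
    rw [← map_one (kroneckerOne d c), ← hL, map_sum]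
    simp only [map_sum, conjTranspose_kronecker, conjTranspose_one, ← mul_kronecker_mul,
      Matrix.one_mul]
    rfl
  have hmono := sum_relEntropy_krausMap_le hρ
    ((posSemidef_ptraceSnd hρ).kronecker (PosSemidef.one (n := c)))
    (fun _ => mulVec_eq_zero_of_ptraceSnd_kronecker_one_mulVec_eq_zero hρ) hL'
  have hterm (a : ι) : condEntropy (krausMap (fun k => L a k ⊗ₖ (1 : Matrix c c ℂ)) ρ) =
      -relEntropy (krausMap (fun k => L a k ⊗ₖ (1 : Matrix c c ℂ)) ρ)
        (krausMap (fun k => L a k ⊗ₖ (1 : Matrix c c ℂ)) (ptraceSnd ρ ⊗ₖ 1)) := by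
    rw [condEntropy_eq_neg_relEntropy (posSemidef_krausMap _ hρ),
      ptraceSnd_krausMap_kronecker_one, krausMap_kronecker_one]
  simp only [hterm, condEntropy_eq_neg_relEntropy hρ, Finset.sum_neg_distrib]
  exact neg_le_neg hmono

end ConditionalEntropy

section Instrument

variable {n₁ n₂ n₃ d : Type*} [Fintype n₁] [Fintype n₃]

lemma ptraceFst₃_kronecker_mul_mul_kronecker [Fintype d] [DecidableEq n₃]
    (K : Matrix (n₁ × n₂) d ℂ) (ρ : Matrix (d × n₃) (d × n₃) ℂ) :
    ptraceFst₃ ((K ⊗ₖ (1 : Matrix n₃ n₃ ℂ)) * ρ * (Kᴴ ⊗ₖ (1 : Matrix n₃ n₃ ℂ))) =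
      krausMap (fun i => K.submatrix (Prod.mk i) id ⊗ₖ (1 : Matrix n₃ n₃ ℂ)) ρ := by
  ext x y
  simp only [ptraceFst₃, krausMap, of_apply, Matrix.sum_apply, conjTranspose_kronecker,
    conjTranspose_one]
  rfl

lemma trace_ptraceFst₃ [Fintype n₂] (A : Matrix ((n₁ × n₂) × n₃) ((n₁ × n₂) × n₃) ℂ) :
    (ptraceFst₃ A).trace = A.trace := by
  simp only [trace, diag_apply, ptraceFst₃, of_apply, Fintype.sum_prod_type]
  conv_rhs => rw [Finset.sum_comm]
  exact Finset.sum_congr rfl fun _ _ => Finset.sum_comm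

end Instrument

theorem stronger_subadditivity_matrix_general
    {n₁ n₂ n₃ d ι : Type*} [Fintype n₁] [Fintype n₂] [Fintype n₃] [Fintype d] [Fintype ι]
    [DecidableEq n₂] [DecidableEq n₃] [DecidableEq d]
    (ρ : Matrix (d × n₃) (d × n₃) ℂ) (hρ : ρ.PosSemidef)
    (K : ι → Matrix (n₁ × n₂) d ℂ) (hK : ∑ α, (K α)ᴴ * K α = 1) (n : ι → ℝ)
    (hn : ∀ α, n α = (((K α ⊗ₖ (1 : Matrix n₃ n₃ ℂ)) * ρ *
      ((K α)ᴴ ⊗ₖ (1 : Matrix n₃ n₃ ℂ))).trace).re)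
    (ρ23 : ι → Matrix (n₂ × n₃) (n₂ × n₃) ℂ)
    (hρ23 : ∀ α, 0 < n α → ρ23 α = ((n α : ℂ))⁻¹ •
      ptraceFst₃ ((K α ⊗ₖ (1 : Matrix n₃ n₃ ℂ)) * ρ * ((K α)ᴴ ⊗ₖ (1 : Matrix n₃ n₃ ℂ))))
    (ρ2 : ι → Matrix n₂ n₂ ℂ) (hρ2 : ∀ α, 0 < n α → ρ2 α = ptraceSnd (ρ23 α)) :
    entropy ρ - entropy (ptraceSnd ρ) ≤
      ∑ α ∈ Finset.univ.filter (fun α => 0 < n α),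
        n α * (entropy (ρ23 α) - entropy (ρ2 α)) := by
  set L : ι → n₁ → Matrix n₂ d ℂ := fun α i => (K α).submatrix (Prod.mk i) id
  set A := fun α => krausMap (fun i => L α i ⊗ₖ (1 : Matrix n₃ n₃ ℂ)) ρ
  have hApos (α : ι) : (A α).PosSemidef := posSemidef_krausMap _ hρ
  have hL : ∑ α, ∑ i, (L α i)ᴴ * L α i = 1 := by
    rw [← hK]
    exact Finset.sum_congr rfl fun α _ =>
      sum_conjTranspose_submatrix_mul_submatrix (Equiv.refl (n₁ × n₂)) (K α)
  have htrace (α : ι) : n α = (A α).trace.re := by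
    rw [hn, ← trace_ptraceFst₃, ptraceFst₃_kronecker_mul_mul_kronecker]
  have hterm (α : ι) (hα : 0 < n α) :
      n α * (entropy (ρ23 α) - entropy (ρ2 α)) = condEntropy (A α) := by
    rw [hρ2 α hα, hρ23 α hα, ptraceFst₃_kronecker_mul_mul_kronecker, ← Complex.ofReal_inv,
      Complex.coe_smul, ← condEntropy, ← trace_mul_condEntropy_inv_trace_smul (hApos α), htrace]
  refine (condEntropy_le_sum_condEntropy_krausMap hρ hL).trans_eq ?_
  rw [Finset.sum_congr rfl fun α hα => hterm α (Finset.mem_filter.1 hα).2]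
  refine (Finset.sum_filter_of_ne fun α _ hne => ?_).symm
  rw [htrace]
  refine (Complex.le_def.1 (hApos α).trace_nonneg).1.lt_of_ne' fun hzero => hne ?_
  rw [← trace_mul_condEntropy_inv_trace_smul (hApos α), hzero, Complex.zero_re, zero_mul]

/-- **Stronger subadditivity of entropy, matrix case** (Theorem 2):
`S[ρ₁₂₃] − S[ρ₁₂] ≤ ∑_{α : n^α > 0} n^α (S[ρ₂₃^α] − S[ρ₂^α])`. -/
theorem stronger_subadditivity_matrix
    {n₁ n₂ n₃ : Type*} [Fintype n₁] [Fintype n₂] [Fintype n₃]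
    [DecidableEq n₁] [DecidableEq n₂] [DecidableEq n₃] {M : ℕ}
    (ρ : Matrix ((n₁ × n₂) × n₃) ((n₁ × n₂) × n₃) ℂ)
    (hρ : ρ.PosSemidef) (hρtr : ρ.trace = 1)
    (K : Fin M → Matrix (n₁ × n₂) (n₁ × n₂) ℂ)
    (hK : ∑ α, (K α)ᴴ * K α = 1)
    (n : Fin M → ℝ)
    (hn : ∀ α, n α =
      (((K α ⊗ₖ (1 : Matrix n₃ n₃ ℂ)) * ρ *
        ((K α)ᴴ ⊗ₖ (1 : Matrix n₃ n₃ ℂ))).trace).re)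
    (ρ23 : Fin M → Matrix (n₂ × n₃) (n₂ × n₃) ℂ)
    (hρ23 : ∀ α, 0 < n α → ρ23 α = ((n α : ℂ))⁻¹ •
      ptraceFst₃ ((K α ⊗ₖ (1 : Matrix n₃ n₃ ℂ)) * ρ *
        ((K α)ᴴ ⊗ₖ (1 : Matrix n₃ n₃ ℂ))))
    (ρ2 : Fin M → Matrix n₂ n₂ ℂ)
    (hρ2 : ∀ α, 0 < n α → ρ2 α = ptraceSnd (ρ23 α)) :
    entropy ρ - entropy (ptraceSnd ρ) ≤
      ∑ α ∈ Finset.univ.filter (fun α => 0 < n α),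
        n α * (entropy (ρ23 α) - entropy (ρ2 α)) :=
  stronger_subadditivity_matrix_general ρ hρ K hK n hn ρ23 hρ23 ρ2 hρ2
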